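/- Let (J,Q,1) be a weak quadratic Jordan algebra over a field k, and let x, y ∈ J both be invertible. Then Q_x^{-1} Q_{x+y} Q_y^{-1} = Q_{x^{-1} + y^{-1}} as endomorphisms of J. -/

import Mathlib

/-!
Write `U_a = Q a` and `{a b c} = Qbil a c b`. Since `Q (x⁻¹) = (Q x)⁻¹`, expanding `Q (x + y)` and
`Q (x⁻¹ + y⁻¹)` reduces the claim to the bilinear identity `U_{x,y} = U_y U_{x⁻¹,y⁻¹} U_x`. This
follows from two evaluations of `U_x {x⁻¹ y z}`: it equals `{x z y}` (`Q_Qbil_inv`, from `QJ2` at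
`x` and the linearization of `QJ3` in its second argument, which needs no scalar extension), and
it equals `{y x⁻¹ U_x z}` (`Qbil_inv_swap`, from `QJ2` at `x⁻¹`).
-/

/-- A weak quadratic Jordan algebra `(J, Q, 1)` over a field `k`.
Endomorphisms act on the right: `x·Q_a` is `Q a x`; a paper product `A B`
(apply `A`, then `B`) corresponds to the Mathlib product `B * A`. -/
structure WeakQuadraticJordan (k J : Type*) [Field k] [AddCommGroup J]
    [Module k J] where
  Q : J → Module.End k J
  one : J
  one_ne_zero : one ≠ 0
  Q_smul : ∀ (t : k) (a : J), Q (t • a) = (t ^ 2) • Q a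
  Qbil : J →ₗ[k] J →ₗ[k] Module.End k J
  Qbil_apply : ∀ a b : J, Qbil a b = Q (a + b) - Q a - Q b
  QJ1 : Q one = 1
  QJ2 : ∀ a b x : J, Qbil a (Q a x) b = Q a (Qbil b x a)
  QJ3 : ∀ a b : J, Q (Q a b) = Q a * Q b * Q a

namespace WeakQuadraticJordan

variable {k J : Type*} [Field k] [AddCommGroup J] [Module k J]

/-- `V W a b` is the endomorphism `V_{a,b} : x ↦ b·Q_{a,x}`. -/
def V (W : WeakQuadraticJordan k J) (a b : J) : Module.End k J where
  toFun x := W.Qbil a x b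
  map_add' x y := by simp
  map_smul' t x := by simp

/-- `δ` is an `ε`-derivation: `δ(a·Q_b) = ε·δ(a)·Q_b + a·Q_{b,δ(b)}`. -/
def IsEpsDerivation (W : WeakQuadraticJordan k J) (ε : k) (δ : Module.End k J) : Prop :=
  ∀ a b : J, δ (W.Q b a) = ε • W.Q b (δ a) + W.Qbil b (δ b) a

/-- Every nonzero element is invertible (`Q_a` is a unit of `End k J`). -/
def IsDivision (W : WeakQuadraticJordan k J) : Prop :=
  ∀ a : J, a ≠ 0 → IsUnit (W.Q a)

end WeakQuadraticJordan


namespace WeakQuadraticJordan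

variable {k J : Type*} [Field k] [AddCommGroup J] [Module k J]

theorem Qbil_comm (W : WeakQuadraticJordan k J) (a b : J) : W.Qbil a b = W.Qbil b a := by
  rw [W.Qbil_apply, W.Qbil_apply, add_comm a b]
  abel

/-- The linearization of `QJ3` in its second argument. -/
theorem Qbil_Q_Q (W : WeakQuadraticJordan k J) (a b c : J) :
    W.Qbil (W.Q a b) (W.Q a c) = W.Q a * W.Qbil b c * W.Q a := by
  rw [W.Qbil_apply, W.Qbil_apply, ← map_add, W.QJ3, W.QJ3, W.QJ3]
  noncomm_ring

/-- If `P` is a two-sided inverse of `Q x`, then `x⁻¹ = P x` satisfies `Q (x⁻¹) = P`. -/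
theorem Q_inv (W : WeakQuadraticJordan k J) {x : J} {P : Module.End k J}
    (h₁ : W.Q x * P = 1) (h₂ : P * W.Q x = 1) : W.Q (P x) = P := by
  have h := W.QJ3 x (P x)
  have hx : W.Q x (P x) = x := by simpa using LinearMap.congr_fun h₁ x
  rw [hx] at h
  calc W.Q (P x) = (P * W.Q x) * W.Q (P x) * (W.Q x * P) := by rw [h₁, h₂]; simp
    _ = P * (W.Q x * W.Q (P x) * W.Q x) * P := by noncomm_ring
    _ = P := by rw [← h, h₂, one_mul]

/-- `U_x {x⁻¹ y z} = {x z y}` for invertible `x`, with `P = (Q x)⁻¹` and `x⁻¹ = P x`. -/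
theorem Q_Qbil_inv (W : WeakQuadraticJordan k J) {x : J} {P : Module.End k J}
    (h₁ : W.Q x * P = 1) (h₂ : P * W.Q x = 1) (y z : J) :
    W.Q x (W.Qbil (P x) z y) = W.Qbil x y z := by
  have e₁ (v : J) : W.Q x (P v) = v := by simpa using LinearMap.congr_fun h₁ v
  have e₂ (v : J) : P (W.Q x v) = v := by simpa using LinearMap.congr_fun h₂ v
  have hP := W.Q_inv h₁ h₂
  -- `U_x {x⁻¹ y z} = {x (U_x⁻¹ y) (U_x z)}`, by the linearized `QJ3` at `x⁻¹`.
  have h := LinearMap.congr_fun (W.Qbil_Q_Q (P x) x (W.Q x z)) y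
  simp only [hP, e₂, Module.End.mul_apply] at h
  rw [h, e₁, W.QJ2, W.Qbil_comm (P y) z, ← W.QJ2, e₁]

/-- `U_x {x⁻¹ y z} = {y x⁻¹ U_x z}` for invertible `x`, with `P = (Q x)⁻¹` and `x⁻¹ = P x`. -/
theorem Qbil_inv_swap (W : WeakQuadraticJordan k J) {x : J} {P : Module.End k J}
    (h₁ : W.Q x * P = 1) (h₂ : P * W.Q x = 1) (y z : J) :
    W.Q x (W.Qbil (P x) z y) = W.Qbil y (W.Q x z) (P x) := by
  have e₁ (v : J) : W.Q x (P v) = v := by simpa using LinearMap.congr_fun h₁ v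
  have e₂ (v : J) : P (W.Q x v) = v := by simpa using LinearMap.congr_fun h₂ v
  have h := W.QJ2 (P x) y (W.Q x z)
  rw [W.Q_inv h₁ h₂, e₂] at h
  rw [h, e₁]

/-- `U_{x,y} = U_y U_{x⁻¹,y⁻¹} U_x` for invertible `x`, `y` with `P = (Q x)⁻¹`, `R = (Q y)⁻¹`. -/
theorem Qbil_eq_Q_mul_Qbil_inv_mul_Q (W : WeakQuadraticJordan k J) {x y : J}
    {P R : Module.End k J} (h₁ : W.Q x * P = 1) (h₂ : P * W.Q x = 1)
    (h₃ : W.Q y * R = 1) (h₄ : R * W.Q y = 1) :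
    W.Qbil x y = W.Q y * W.Qbil (P x) (R y) * W.Q x := by
  ext t
  rw [Module.End.mul_apply, Module.End.mul_apply, W.Qbil_comm (P x), W.Q_Qbil_inv h₃ h₄,
    ← W.Qbil_inv_swap h₁ h₂, W.Q_Qbil_inv h₁ h₂]

end WeakQuadraticJordan

/-- For invertible `x, y`: `Q_x⁻¹ Q_{x+y} Q_y⁻¹ = Q_{x⁻¹ + y⁻¹}`.
(Paper products `A B C` = apply `A`, then `B`, then `C` = Mathlib `C * B * A`.) -/
theorem Q_inv_sum_identity {k J : Type*} [Field k] [AddCommGroup J] [Module k J]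
    (W : WeakQuadraticJordan k J) (x y : J)
    (hx : IsUnit (W.Q x)) (hy : IsUnit (W.Q y)) :
    (↑hy.unit⁻¹ : Module.End k J) * W.Q (x + y) * (↑hx.unit⁻¹ : Module.End k J)
      = W.Q ((↑hx.unit⁻¹ : Module.End k J) x + (↑hy.unit⁻¹ : Module.End k J) y) := by
  have h₁ : W.Q x * (↑hx.unit⁻¹ : Module.End k J) = 1 := hx.mul_val_inv
  have h₂ : (↑hx.unit⁻¹ : Module.End k J) * W.Q x = 1 := hx.val_inv_mul
  have h₃ : W.Q y * (↑hy.unit⁻¹ : Module.End k J) = 1 := hy.mul_val_inv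
  have h₄ : (↑hy.unit⁻¹ : Module.End k J) * W.Q y = 1 := hy.val_inv_mul
  generalize (↑hx.unit⁻¹ : Module.End k J) = P at *
  generalize (↑hy.unit⁻¹ : Module.End k J) = R at *
  have hxy := W.Qbil_eq_Q_mul_Qbil_inv_mul_Q h₁ h₂ h₃ h₄
  have hadd (a b : J) : W.Q (a + b) = W.Qbil a b + W.Q a + W.Q b := by
    rw [W.Qbil_apply]; abel
  rw [hadd, hadd, W.Q_inv h₁ h₂, W.Q_inv h₃ h₄, hxy]
  calc R * (W.Q y * W.Qbil (P x) (R y) * W.Q x + W.Q x + W.Q y) * P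
      = (R * W.Q y) * W.Qbil (P x) (R y) * (W.Q x * P) + R * (W.Q x * P) + (R * W.Q y) * P := by
        noncomm_ring
    _ = W.Qbil (P x) (R y) + P + R := by
        rw [h₁, h₄, one_mul, mul_one, mul_one, one_mul]; abel
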